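/- arXiv:0711.1534 — 3 statements merged into one kernel-verified Lean document; each statement's English description precedes it below -/
import Mathlib

section
/- Let G be a group, A an abelian group equipped with a translation-invariant metric ρ (i.e. ρ(a+c, b+c) = ρ(a,b) for all a,b,c ∈ A), S : G → A a group homomorphism, and j : A → G a group homomorphism with S ∘ j = id_A. Let N = ker S and let d_N be a metric on N that is right-invariant (d_N(xk, yk) = d_N(x,y) for all x,y,k ∈ N) and invariant under conjugation by every element of G (d_N(gxg⁻¹, gyg⁻¹) = d_N(x,y) for all x,y ∈ N, g ∈ G). For g ∈ G set n(g) = j(S(g))⁻¹ · g, which lies in N. Then d(g,h) := ρ(S(g), S(h)) + d_N(n(g), n(h)) defines a right-invariant metric on G whose restriction to N × N equals d_N. -/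
/-- If `S : G → A` is a homomorphism onto an abelian group with a
translation-invariant metric, `j` a homomorphic right inverse of `S`, and `d_N`
a right-invariant, conjugation-invariant metric on `N = ker S`, then
`d g h = ρ (S g) (S h) + d_N (n g) (n h)` (with `n g = j (S g)⁻¹ * g`)
is a right-invariant metric on `G` extending `d_N`. -/
theorem extend_metric_from_kernel {G A : Type*} [Group G] [AddCommGroup A]
    [MetricSpace A]
    (h_transl : ∀ a b c : A, dist (a + c) (b + c) = dist a b)
    (S : G → A) (hS : ∀ g h : G, S (g * h) = S g + S h)
    (j : A → G) (hj : ∀ a b : A, j (a + b) = j a * j b)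
    (hSj : ∀ a : A, S (j a) = a)
    (dN : G → G → ℝ)
    (hN_symm : ∀ x y : G, S x = 0 → S y = 0 → dN x y = dN y x)
    (hN_tri : ∀ x y z : G, S x = 0 → S y = 0 → S z = 0 →
      dN x z ≤ dN x y + dN y z)
    (hN_eq : ∀ x y : G, S x = 0 → S y = 0 → (dN x y = 0 ↔ x = y))
    (hN_right : ∀ x y k : G, S x = 0 → S y = 0 → S k = 0 →
      dN (x * k) (y * k) = dN x y)
    (hN_conj : ∀ x y : G, S x = 0 → S y = 0 → ∀ g : G,
      dN (g * x * g⁻¹) (g * y * g⁻¹) = dN x y)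
    (n : G → G) (hn : ∀ g : G, n g = (j (S g))⁻¹ * g)
    (d : G → G → ℝ)
    (hd : ∀ g h : G, d g h = dist (S g) (S h) + dN (n g) (n h)) :
    (∀ g h : G, d g h = d h g) ∧
    (∀ g h k : G, d g h ≤ d g k + d k h) ∧
    (∀ g h : G, d g h = 0 ↔ g = h) ∧
    (∀ g h k : G, d (g * k) (h * k) = d g h) ∧
    (∀ x y : G, S x = 0 → S y = 0 → d x y = dN x y) := by
  have S1 : S 1 = 0 := by
    have h := hS 1 1
    rw [mul_one] at h
    exact left_eq_add.mp h
  have Sinv : ∀ g, S g⁻¹ = - S g := by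
    intro g
    have h := hS g⁻¹ g
    rw [inv_mul_cancel, S1] at h
    exact eq_neg_of_add_eq_zero_left h.symm
  have Sn : ∀ g, S (n g) = 0 := by
    intro g
    rw [hn, hS, Sinv, hSj, neg_add_cancel]
  have j0 : j 0 = 1 := by
    have h := hj 0 0
    rw [add_zero] at h
    exact left_eq_mul.mp h
  have nonneg : ∀ x y, S x = 0 → S y = 0 → 0 ≤ dN x y := by
    intro x y hx hy
    have h1 := hN_tri x y x hx hy hx
    have h2 := (hN_eq x x hx hx).2 rfl
    have h3 := hN_symm x y hx hy
    linarith
  have nmul : ∀ g k, n (g * k) = ((j (S k))⁻¹ * n g * ((j (S k))⁻¹)⁻¹) * n k := by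
    intro g k
    rw [hn, hn, hn, hS, hj]
    group
  refine ⟨?_, ?_, ?_, ?_, ?_⟩
  · intro g h
    rw [hd, hd, dist_comm, hN_symm _ _ (Sn g) (Sn h)]
  · intro g h k
    rw [hd, hd, hd]
    have h1 := dist_triangle (S g) (S k) (S h)
    have h2 := hN_tri _ _ _ (Sn g) (Sn k) (Sn h)
    linarith
  · intro g h
    rw [hd]
    constructor
    · intro e
      have h1 := nonneg _ _ (Sn g) (Sn h)
      have h2 : 0 ≤ dist (S g) (S h) := dist_nonneg
      have h3 : S g = S h := dist_eq_zero.mp (by linarith)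
      have h4 : n g = n h := (hN_eq _ _ (Sn g) (Sn h)).1 (by linarith)
      rw [hn, hn, h3] at h4
      exact mul_left_cancel h4
    · rintro rfl
      rw [dist_self, (hN_eq _ _ (Sn g) (Sn g)).2 rfl, add_zero]
  · intro g h k
    have Sc : ∀ c x, S x = 0 → S (c * x * c⁻¹) = 0 := by
      intro c x hx
      rw [hS, hS, Sinv, hx, add_zero, add_neg_cancel]
    rw [hd, hd, hS, hS, h_transl, nmul, nmul,
      hN_right _ _ _ (Sc _ _ (Sn g)) (Sc _ _ (Sn h)) (Sn k),
      hN_conj _ _ (Sn g) (Sn h)]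
  · intro x y hx hy
    rw [hd, hn, hn, hx, hy, j0, dist_self, inv_one, one_mul, one_mul, zero_add]
end

section
/- Let E be a real Banach space and let G : ℝ × ℝ × E → E be a smooth map such that for each (s,t) the map G_{s,t} := G(s,t,·) : E → E is a smooth diffeomorphism with G smooth jointly in all variables, and such that the families of vector fields V and Z defined by V(s,t, G(s,t,x)) = ∂G/∂t(s,t,x) and Z(s,t, G(s,t,x)) = ∂G/∂s(s,t,x) are smooth. Then for all s, t and all y ∈ E: ∂V/∂s(s,t,y) = ∂Z/∂t(s,t,y) + D_yZ(s,t,y)(V(s,t,y)) − D_yV(s,t,y)(Z(s,t,y)), where D_y denotes the Fréchet derivative in the space variable. In other words, ∂_s V = ∂_t Z + [V, Z], where the bracket is given by [V,Z](y) = DZ(y)·V(y) − DV(y)·Z(y). -/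
theorem aux_partial_fst {E : Type*} [NormedAddCommGroup E] [NormedSpace ℝ E]
    {F : Type*} [NormedAddCommGroup F] [NormedSpace ℝ F]
    (g : ℝ × F → E) (s : ℝ) (t : F) (hg : DifferentiableAt ℝ g (s, t)) :
    HasDerivAt (fun σ => g (σ, t)) (fderiv ℝ g (s, t) (1, 0)) s := by
  have h1 : HasDerivAt (fun σ : ℝ => (σ, t)) ((1 : ℝ), (0 : F)) s :=
    (hasDerivAt_id s).prodMk (hasDerivAt_const s t)
  exact HasFDerivAt.comp_hasDerivAt (x := s) (f := fun σ : ℝ => (σ, t)) hg.hasFDerivAt h1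

theorem aux_partial_snd {E : Type*} [NormedAddCommGroup E] [NormedSpace ℝ E]
    (g : ℝ × ℝ → E) (s t : ℝ) (hg : DifferentiableAt ℝ g (s, t)) :
    HasDerivAt (fun τ => g (s, τ)) (fderiv ℝ g (s, t) (0, 1)) t := by
  have h1 : HasDerivAt (fun τ : ℝ => (s, τ)) ((0 : ℝ), (1 : ℝ)) t :=
    (hasDerivAt_const t s).prodMk (hasDerivAt_id t)
  exact HasFDerivAt.comp_hasDerivAt (x := t) (f := fun τ : ℝ => (s, τ)) hg.hasFDerivAt h1

theorem aux_mixed {E : Type*} [NormedAddCommGroup E] [NormedSpace ℝ E]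
    (g : ℝ × ℝ → E) (hg : ContDiff ℝ (⊤ : ℕ∞) g) (s t : ℝ) :
    deriv (fun σ => deriv (fun τ => g (σ, τ)) t) s =
      deriv (fun τ => deriv (fun σ => g (σ, τ)) s) t := by
  have hd : Differentiable ℝ g := hg.differentiable (by simp)
  have hD : Differentiable ℝ (fderiv ℝ g) :=
    (hg.fderiv_right (m := 1) (by norm_cast)).differentiable (by simp)
  have e1 : (fun σ => deriv (fun τ => g (σ, τ)) t) = fun σ => fderiv ℝ g (σ, t) (0, 1) :=
    funext fun σ => (aux_partial_snd g σ t (hd _)).deriv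
  have e2 : (fun τ => deriv (fun σ => g (σ, τ)) s) = fun τ => fderiv ℝ g (s, τ) (1, 0) :=
    funext fun τ => (aux_partial_fst g s τ (hd _)).deriv
  have d1 := (aux_partial_fst (fderiv ℝ g) s t (hD _)).clm_apply
    (hasDerivAt_const s ((0 : ℝ), (1 : ℝ)))
  have d2 := (aux_partial_snd (fderiv ℝ g) s t (hD _)).clm_apply
    (hasDerivAt_const t ((1 : ℝ), (0 : ℝ)))
  rw [e1, e2, d1.deriv, d2.deriv]
  have hs : IsSymmSndFDerivAt ℝ g (s, t) :=
    hg.contDiffAt.isSymmSndFDerivAt (by simp; norm_cast)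
  simpa using hs.eq (1, 0) (0, 1)

theorem aux_chain {E : Type*} [NormedAddCommGroup E] [NormedSpace ℝ E]
    (w : ℝ × E → E) (hw : Differentiable ℝ w) (c : ℝ → E) (s : ℝ)
    (hc : DifferentiableAt ℝ c s) :
    deriv (fun σ => w (σ, c σ)) s =
      deriv (fun σ => w (σ, c s)) s + fderiv ℝ (fun y => w (s, y)) (c s) (deriv c s) := by
  have h1 : HasDerivAt (fun σ : ℝ => (σ, c σ)) ((1 : ℝ), deriv c s) s :=
    (hasDerivAt_id s).prodMk hc.hasDerivAt
  have h2 := HasFDerivAt.comp_hasDerivAt (x := s) (f := fun σ : ℝ => (σ, c σ))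
    (hw (s, c s)).hasFDerivAt h1
  have h3 : HasFDerivAt (fun y => w (s, y))
      ((fderiv ℝ w (s, c s)).comp (ContinuousLinearMap.inr ℝ ℝ E)) (c s) :=
    HasFDerivAt.comp (c s) (f := fun y : E => (s, y)) (hw (s, c s)).hasFDerivAt
      (hasFDerivAt_prodMk_right s (c s))
  have h4 : deriv (fun σ => w (σ, c σ)) s = fderiv ℝ w (s, c s) (1, deriv c s) := h2.deriv
  rw [h4, (aux_partial_fst w s (c s) (hw _)).deriv, h3.fderiv]
  simp [← map_add]

/-- For a smooth two-parameter family of diffeomorphisms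
`G s t : E → E` with time-velocity `V` and deformation-velocity `Z`
(both transported back by `G s t`), one has `∂ₛV = ∂ₜZ + [V, Z]`. -/
theorem two_parameter_velocity_identity {E : Type*} [NormedAddCommGroup E]
    [NormedSpace ℝ E] [CompleteSpace E]
    (G : ℝ → ℝ → E → E)
    (hG : ContDiff ℝ (⊤ : ℕ∞) (fun p : ℝ × ℝ × E => G p.1 p.2.1 p.2.2))
    (Ginv : ℝ → ℝ → E → E)
    (hGinv : ContDiff ℝ (⊤ : ℕ∞) (fun p : ℝ × ℝ × E => Ginv p.1 p.2.1 p.2.2))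
    (h_left_inv : ∀ s t x, Ginv s t (G s t x) = x)
    (h_right_inv : ∀ s t x, G s t (Ginv s t x) = x)
    (V Z : ℝ → ℝ → E → E)
    (hV : ContDiff ℝ (⊤ : ℕ∞) (fun p : ℝ × ℝ × E => V p.1 p.2.1 p.2.2))
    (hZ : ContDiff ℝ (⊤ : ℕ∞) (fun p : ℝ × ℝ × E => Z p.1 p.2.1 p.2.2))
    (hVdef : ∀ s t x, V s t (G s t x) = deriv (fun τ => G s τ x) t)
    (hZdef : ∀ s t x, Z s t (G s t x) = deriv (fun σ => G σ t x) s) :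
    ∀ (s t : ℝ) (y : E),
      deriv (fun σ => V σ t y) s =
        deriv (fun τ => Z s τ y) t
          + fderiv ℝ (Z s t) y (V s t y) - fderiv ℝ (V s t) y (Z s t y) := by
  intro s t y
  obtain ⟨x, rfl⟩ : ∃ x, G s t x = y := ⟨Ginv s t y, h_right_inv s t y⟩
  have hg : ContDiff ℝ (⊤ : ℕ∞) (fun p : ℝ × ℝ => G p.1 p.2 x) :=
    hG.comp (f := fun p : ℝ × ℝ => (p.1, p.2, x)) (by fun_prop)
  have hgd : Differentiable ℝ (fun p : ℝ × ℝ => G p.1 p.2 x) := hg.differentiable (by simp)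
  have hv : ContDiff ℝ (⊤ : ℕ∞) (fun p : ℝ × E => V p.1 t p.2) :=
    hV.comp (f := fun p : ℝ × E => (p.1, t, p.2)) (by fun_prop)
  have hz : ContDiff ℝ (⊤ : ℕ∞) (fun p : ℝ × E => Z s p.1 p.2) :=
    hZ.comp (f := fun p : ℝ × E => (s, p.1, p.2)) (by fun_prop)
  have k1 := aux_chain _ (hv.differentiable (by simp)) (fun σ => G σ t x) s
    (aux_partial_fst _ s t (hgd _)).differentiableAt
  have k2 := aux_chain _ (hz.differentiable (by simp)) (fun τ => G s τ x) t
    (aux_partial_snd _ s t (hgd _)).differentiableAt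
  have k3 := aux_mixed _ hg s t
  simp only [← hVdef, ← hZdef] at k1 k2 k3
  rw [k1, k2] at k3
  exact eq_sub_of_add_eq k3
end

section
/- Let E be a finite-dimensional real vector space and ω : E × E → ℝ a nondegenerate alternating bilinear form. Let Z, V : [0,1] × [0,1] × E → E be smooth families of vector fields (smooth jointly in (s,t,x)) such that: (i) for each fixed (s,t), the 1-forms x ↦ ω(Z(s,t,x), ·) and x ↦ ω(V(s,t,x), ·) are closed, i.e. the bilinear form (ξ,η) ↦ D_x[ω(Z(s,t,·), ξ)](η) is symmetric in (ξ,η), and likewise for V; (ii) the linking identity ∂_sV(s,t,x) = ∂_tZ(s,t,x) + D_xZ(s,t,x)(V(s,t,x)) − D_xV(s,t,x)(Z(s,t,x)) holds; (iii) ∫₀¹ ω(Z(s,t,x), ξ) ds = 0 for all t ∈ [0,1], x ∈ E, ξ ∈ E; and (iv) V(0,t,x) = 0 for all t, x. Then for each t, setting u_t(x) = ∫₀¹ ω(Z(s,t,x), V(s,t,x)) ds, one has ω(V(1,t,x), ξ) = D u_t(x)(ξ) for all x ∈ E and ξ ∈ E; that is, i(V_{(1,t)})ω = du_t, so V_{(1,t)}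 is a Hamiltonian vector field with Hamiltonian u_t. -/
/-- Differentiation under the integral sign for a jointly `C¹` integrand. -/
theorem hfd_param {H : Type*} [NormedAddCommGroup H] [NormedSpace ℝ H] [FiniteDimensional ℝ H]
    (F : ℝ → H → ℝ) (hF : ContDiff ℝ 1 (fun p : ℝ × H => F p.1 p.2)) (x : H) :
    Continuous (fun s => fderiv ℝ (F s) x) ∧
    HasFDerivAt (fun y => ∫ s in (0:ℝ)..1, F s y) (∫ s in (0:ℝ)..1, fderiv ℝ (F s) x) x := by
  have : ProperSpace H := FiniteDimensional.proper ℝ H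
  have hd : ∀ s y, HasFDerivAt (F s)
      ((fderiv ℝ (fun p : ℝ × H => F p.1 p.2) (s, y)).comp (ContinuousLinearMap.inr ℝ ℝ H)) y := by
    intro s y
    have h1 := (hF.differentiable (by norm_num) (s, y)).hasFDerivAt
    exact h1.comp y (hasFDerivAt_prodMk_right s y)
  have hc : Continuous (fun p : ℝ × H => fderiv ℝ (F p.1) p.2) := by
    have h2 := hF.continuous_fderiv (by norm_num)
    have h3 : (fun p : ℝ × H => fderiv ℝ (F p.1) p.2) = fun p =>
        (fderiv ℝ (fun p : ℝ × H => F p.1 p.2) p).comp (ContinuousLinearMap.inr ℝ ℝ H) := by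
      funext p
      exact (hd p.1 p.2).fderiv
    rw [h3]
    exact h2.clm_comp continuous_const
  have hcx : ∀ y, Continuous (fun s => F s y) := fun y =>
    hF.continuous.comp (by fun_prop : Continuous fun s : ℝ => (s, y))
  have hcx' : Continuous (fun s => fderiv ℝ (F s) x) :=
    hc.comp (by fun_prop : Continuous fun s : ℝ => (s, x))
  refine ⟨hcx', ?_⟩
  obtain ⟨C, hC⟩ := (isCompact_Icc.prod (isCompact_closedBall x 1)).exists_bound_of_continuousOn
    (hc.continuousOn (s := Set.Icc (0:ℝ) 1 ×ˢ Metric.closedBall x 1))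
  refine intervalIntegral.hasFDerivAt_integral_of_dominated_of_fderiv_le
    (F := fun y s => F s y) (F' := fun y s => fderiv ℝ (F s) y) (bound := fun _ => C)
    (Metric.closedBall_mem_nhds x one_pos) ?_ ?_ ?_ ?_ ?_ ?_
  · exact Filter.Eventually.of_forall fun y => (hcx y).aestronglyMeasurable
  · exact (hcx x).intervalIntegrable _ _
  · exact hcx'.aestronglyMeasurable
  · refine Filter.Eventually.of_forall fun s hs y hy => hC (s, y) ⟨?_, hy⟩
    rw [Set.uIoc_of_le zero_le_one] at hs
    exact ⟨hs.1.le, hs.2⟩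
  · exact intervalIntegrable_const
  · exact Filter.Eventually.of_forall fun s _ y _ => (hd s y).differentiableAt.hasFDerivAt

/-- The Proposition of Section 3 in the single-chart setting:
if `Z`, `V` are smooth families of symplectic vector fields satisfying
`∂ₛV = ∂ₜZ + [V,Z]`, with `∫₀¹ i(Z_{s,t})ω ds = 0` and `V_{0,t} = 0`, then
`i(V_{1,t})ω = d u_t` where `u_t(x) = ∫₀¹ ω(Z(s,t,x), V(s,t,x)) ds`. -/
theorem hamiltonian_from_deformation {E : Type*} [NormedAddCommGroup E]
    [NormedSpace ℝ E] [FiniteDimensional ℝ E]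
    (ω : E →ₗ[ℝ] E →ₗ[ℝ] ℝ)
    (h_alt : ∀ x : E, ω x x = 0)
    (h_nondeg : ∀ x : E, (∀ ξ : E, ω x ξ = 0) → x = 0)
    (Z V : ℝ → ℝ → E → E)
    (hZ_smooth : ContDiff ℝ (⊤ : ℕ∞) (fun p : ℝ × ℝ × E => Z p.1 p.2.1 p.2.2))
    (hV_smooth : ContDiff ℝ (⊤ : ℕ∞) (fun p : ℝ × ℝ × E => V p.1 p.2.1 p.2.2))
    (hZ_closed : ∀ (s t : ℝ) (x ξ η : E),
      fderiv ℝ (fun y => ω (Z s t y) ξ) x η = fderiv ℝ (fun y => ω (Z s t y) η) x ξ)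
    (hV_closed : ∀ (s t : ℝ) (x ξ η : E),
      fderiv ℝ (fun y => ω (V s t y) ξ) x η = fderiv ℝ (fun y => ω (V s t y) η) x ξ)
    (h_link : ∀ (s t : ℝ) (x : E),
      deriv (fun σ => V σ t x) s =
        deriv (fun τ => Z s τ x) t
          + fderiv ℝ (Z s t) x (V s t x) - fderiv ℝ (V s t) x (Z s t x))
    (h_int : ∀ t ∈ Set.Icc (0:ℝ) 1, ∀ x ξ : E,
      (∫ s in (0:ℝ)..1, ω (Z s t x) ξ) = 0)
    (h_V0 : ∀ (t : ℝ) (x : E), V 0 t x = 0) :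
    ∀ t ∈ Set.Icc (0:ℝ) 1, ∀ x ξ : E,
      ω (V 1 t x) ξ =
        fderiv ℝ (fun y => ∫ s in (0:ℝ)..1, ω (Z s t y) (V s t y)) x ξ := by
  intro t ht x ξ
  obtain ⟨Ω, hΩ⟩ : ∃ Ω : E →L[ℝ] E →L[ℝ] ℝ, ∀ a b, ω a b = Ω a b :=
    ⟨ω.toContinuousBilinearMap, fun _ _ => rfl⟩
  have h_skew : ∀ a b, Ω a b = - Ω b a := by
    intro a b
    have h := h_alt (a + b)
    simp only [map_add, LinearMap.add_apply, h_alt] at h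
    rw [← hΩ, ← hΩ]
    linarith
  simp only [hΩ] at *
  have hZ1 : ContDiff ℝ 1 (fun p : ℝ × ℝ × E => Z p.1 p.2.1 p.2.2) := hZ_smooth.of_le (by simp)
  have hV1 : ContDiff ℝ 1 (fun p : ℝ × ℝ × E => V p.1 p.2.1 p.2.2) := hV_smooth.of_le (by simp)
  have hZx : ∀ s, Differentiable ℝ (Z s t) := fun s =>
    (hZ1.comp (by fun_prop : ContDiff ℝ 1 fun y : E => (s, t, y))).differentiable (by norm_num)
  have hVx : ∀ s, Differentiable ℝ (V s t) := fun s =>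
    (hV1.comp (by fun_prop : ContDiff ℝ 1 fun y : E => (s, t, y))).differentiable (by norm_num)
  have hZt : ∀ s, Differentiable ℝ (fun τ => Z s τ x) := fun s =>
    (hZ1.comp (by fun_prop : ContDiff ℝ 1 fun y : ℝ => (s, y, x))).differentiable (by norm_num)
  have hVs : ContDiff ℝ 1 (fun s => V s t x) :=
    hV1.comp (by fun_prop : ContDiff ℝ 1 fun y : ℝ => (y, t, x))
  have hZc : ∀ s a b, Ω (fderiv ℝ (Z s t) x a) b = Ω (fderiv ℝ (Z s t) x b) a := by
    intro s a b
    have h := hZ_closed s t x b a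
    have e : ∀ c, fderiv ℝ (fun y => Ω (Z s t y) c) x =
        (Ω.flip c).comp (fderiv ℝ (Z s t) x) := fun c =>
      ((Ω.flip c).hasFDerivAt.comp x (hZx s x).hasFDerivAt).fderiv
    simpa [e] using h
  have hVc : ∀ s a b, Ω (fderiv ℝ (V s t) x a) b = Ω (fderiv ℝ (V s t) x b) a := by
    intro s a b
    have h := hV_closed s t x b a
    have e : ∀ c, fderiv ℝ (fun y => Ω (V s t y) c) x =
        (Ω.flip c).comp (fderiv ℝ (V s t) x) := fun c =>
      ((Ω.flip c).hasFDerivAt.comp x (hVx s x).hasFDerivAt).fderiv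
    simpa [e] using h
  -- the Hamiltonian
  obtain ⟨hA, hA'⟩ := hfd_param (fun s y => Ω (Z s t y) (V s t y)) (by
    have h1 : ContDiff ℝ 1 (fun p : ℝ × E => Z p.1 t p.2) :=
      hZ1.comp (by fun_prop : ContDiff ℝ 1 fun p : ℝ × E => (p.1, t, p.2))
    have h2 : ContDiff ℝ 1 (fun p : ℝ × E => V p.1 t p.2) :=
      hV1.comp (by fun_prop : ContDiff ℝ 1 fun p : ℝ × E => (p.1, t, p.2))
    exact (Ω.contDiff.comp h1).clm_apply h2) x
  -- the mean of Z
  obtain ⟨hB, hB'⟩ := hfd_param (fun s τ => Ω (Z s τ x) ξ) (by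
    have h1 : ContDiff ℝ 1 (fun p : ℝ × ℝ => Z p.1 p.2 x) :=
      hZ1.comp (by fun_prop : ContDiff ℝ 1 fun p : ℝ × ℝ => (p.1, p.2, x))
    exact (Ω.contDiff.comp h1).clm_apply contDiff_const) t
  have hB0 : (∫ s in (0:ℝ)..1, fderiv ℝ (fun τ => Ω (Z s τ x) ξ) t) = 0 := by
    have hu : UniqueDiffWithinAt ℝ (Set.Icc (0:ℝ) 1) t := uniqueDiffOn_Icc one_pos t ht
    refine hu.eq hB'.hasFDerivWithinAt ?_
    exact (hasFDerivWithinAt_const (0:ℝ) t _).congr (fun τ hτ => h_int τ hτ x ξ) (h_int t ht x ξ)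
  have eB : ∀ s, fderiv ℝ (fun τ => Ω (Z s τ x) ξ) t 1 = Ω (deriv (fun τ => Z s τ x) t) ξ := by
    intro s
    have h1 : HasDerivAt (fun τ => Ω (Z s τ x) ξ) (Ω (deriv (fun τ => Z s τ x) t) ξ) t :=
      (Ω.flip ξ).hasFDerivAt.comp_hasDerivAt t (hZt s t).hasDerivAt
    rw [fderiv_apply_one_eq_deriv]
    exact h1.deriv
  have eA : ∀ s, fderiv ℝ (fun y => Ω (Z s t y) (V s t y)) x ξ =
      Ω (fderiv ℝ (Z s t) x ξ) (V s t x) + Ω (Z s t x) (fderiv ℝ (V s t) x ξ) := by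
    intro s
    have h1 : HasFDerivAt (fun y => Ω (Z s t y)) (Ω.comp (fderiv ℝ (Z s t) x)) x :=
      Ω.hasFDerivAt.comp x (hZx s x).hasFDerivAt
    rw [(h1.clm_apply (hVx s x).hasFDerivAt).fderiv]
    simp [add_comm]
  have hder : ∀ s, HasDerivAt (fun s => Ω (V s t x) ξ)
      (fderiv ℝ (fun τ => Ω (Z s τ x) ξ) t 1
        + fderiv ℝ (fun y => Ω (Z s t y) (V s t y)) x ξ) s := by
    intro s
    have h1 := (Ω.flip ξ).hasFDerivAt.comp_hasDerivAt s
      (hVs.differentiable (by norm_num) s).hasDerivAt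
    refine h1.congr_deriv ?_
    rw [h_link, eA, eB]
    simp only [map_sub, map_add, ContinuousLinearMap.flip_apply]
    rw [hZc s (V s t x) ξ, hVc s (Z s t x) ξ, h_skew (Z s t x)]
    ring
  have hA1 := hA.clm_apply (continuous_const (y := ξ))
  have hB1 := hB.clm_apply (continuous_const (y := (1:ℝ)))
  have hFTC := intervalIntegral.integral_eq_sub_of_hasDerivAt (a := 0) (b := 1)
    (fun s _ => hder s) ((hB1.add hA1).intervalIntegrable _ _)
  rw [intervalIntegral.integral_add (hB1.intervalIntegrable _ _) (hA1.intervalIntegrable _ _),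
    ← ContinuousLinearMap.intervalIntegral_apply (hB.intervalIntegrable _ _),
    ← ContinuousLinearMap.intervalIntegral_apply (hA.intervalIntegrable _ _), hB0] at hFTC
  rw [hA'.fderiv]
  simpa [h_V0] using hFTC.symm
end
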